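/- arXiv:1801.08572 — 2 statements merged into one kernel-verified Lean document; each statement's English description precedes it below -/
import Mathlib

section
/- Let U be an N_o × N_w complex matrix with orthonormal columns (U*U = I), partitioned as U = [U_f; U_r] where U_f has N_f rows. Let Ψ be an N_g × N_o matrix with orthonormal columns, P_w = Ψ U U* Ψ*, and P_f = Ψ [[I_{N_f}, 0],[0,0]] Ψ*. Then P_w P_f = P_f if and only if U_f U_f* = I_{N_f}. -/
/-!
Since `Ψ` has orthonormal columns, `A ↦ Ψ A Ψᴴ` is multiplicative and injective, so the condition
`P_w P_f = P_f` reads `Q E = E` for `Q = U Uᴴ` and `E = [[1, 0], [0, 0]]`. This says that the upper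
left block of `Q`, namely `U_f U_fᴴ`, is `1` and that the lower left block vanishes. The second
requirement follows from the first: `Q` is an orthogonal projection, so `1 - Q` is positive
semidefinite, and a positive semidefinite matrix with a zero on the diagonal has the whole column
through it zero.
-/

open Matrix

section Semiring

variable {R l n : Type*} [Semiring R] [Fintype l] [Fintype n] [DecidableEq n]

theorem conj_mul_conj_of_mul_eq_one {Ψ : Matrix l n R} {Φ : Matrix n l R} (h : Φ * Ψ = 1)
    (A B : Matrix n n R) : Ψ * A * Φ * (Ψ * B * Φ) = Ψ * (A * B) * Φ :=
  calc Ψ * A * Φ * (Ψ * B * Φ) = Ψ * A * (Φ * Ψ) * B * Φ := by simp only [Matrix.mul_assoc]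
    _ = Ψ * (A * B) * Φ := by rw [h, Matrix.mul_one, Matrix.mul_assoc Ψ A B]

theorem conj_injective_of_mul_eq_one {Ψ : Matrix l n R} {Φ : Matrix n l R} (h : Φ * Ψ = 1) :
    Function.Injective fun A : Matrix n n R ↦ Ψ * A * Φ := by
  refine Function.LeftInverse.injective (g := fun B ↦ Φ * B * Ψ) fun A ↦ ?_
  calc Φ * (Ψ * A * Φ) * Ψ = Φ * Ψ * A * (Φ * Ψ) := by simp only [Matrix.mul_assoc]
    _ = A := by rw [h, Matrix.one_mul, Matrix.mul_one]

end Semiring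

theorem mul_fromBlocks_one_zero_zero_zero {R k l m n : Type*} [NonAssocSemiring R] [Fintype m]
    [Fintype n] [DecidableEq m] (A : Matrix (k ⊕ l) (m ⊕ n) R) :
    A * (fromBlocks 1 0 0 0 : Matrix (m ⊕ n) (m ⊕ n) R) =
      fromBlocks A.toBlocks₁₁ 0 A.toBlocks₂₁ 0 := by
  conv_lhs => rw [← fromBlocks_toBlocks A, fromBlocks_multiply]
  simp only [Matrix.mul_one, Matrix.mul_zero, add_zero]

theorem toBlocks₁₁_mul_conjTranspose_self {R m n p : Type*} [NonUnitalNonAssocSemiring R]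
    [StarRing R] [Fintype p] (U : Matrix (m ⊕ n) p R) :
    (U * Uᴴ).toBlocks₁₁ = U.submatrix Sum.inl id * (U.submatrix Sum.inl id)ᴴ :=
  rfl

theorem isStarProjection_mul_conjTranspose {R m n : Type*} [Semiring R] [StarRing R] [Fintype m]
    [Fintype n] [DecidableEq n] {U : Matrix m n R} (hU : Uᴴ * U = 1) :
    IsStarProjection (U * Uᴴ) where
  isIdempotentElem := by
    rw [IsIdempotentElem, Matrix.mul_assoc, ← Matrix.mul_assoc Uᴴ, hU, Matrix.one_mul]
  isSelfAdjoint := isHermitian_mul_conjTranspose_self U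

section Order

open scoped ComplexOrder MatrixOrder

variable {𝕜 l m n : Type*} [RCLike 𝕜]

theorem apply_eq_zero_of_posSemidef_of_apply_self_eq_zero {A : Matrix n n 𝕜} (hA : A.PosSemidef)
    {j : n} (hj : A j j = 0) (i : n) : A i j = 0 := by
  -- The kernel criterion needs a finite index type: apply it to a 2 × 2 principal submatrix.
  have hB : (A.submatrix ![j, i] ![j, i]).PosSemidef := hA.submatrix _
  have hcol : (A.submatrix ![j, i] ![j, i]).col 0 = 0 := by
    rw [← mulVec_single_one, ← hB.dotProduct_mulVec_zero_iff, mulVec_single_one,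
      ← Pi.single_star, star_one, single_one_dotProduct]
    exact hj
  exact congr_fun hcol 1

variable [DecidableEq m] [DecidableEq n]

theorem toBlocks₂₁_eq_zero_of_le_one {Q : Matrix (m ⊕ n) (m ⊕ n) 𝕜} (hQ : Q ≤ 1)
    (h : Q.toBlocks₁₁ = 1) : Q.toBlocks₂₁ = 0 := by
  ext i j
  have hQj : Q (Sum.inl j) (Sum.inl j) = 1 := (congr_fun₂ h j j).trans (one_apply_eq j)
  have hj : (1 - Q) (Sum.inl j) (Sum.inl j) = 0 := by
    rw [Matrix.sub_apply, one_apply_eq, hQj, sub_self]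
  have hij := apply_eq_zero_of_posSemidef_of_apply_self_eq_zero (le_iff.mp hQ) hj (Sum.inr i)
  rwa [Matrix.sub_apply, one_apply_ne Sum.inr_ne_inl, zero_sub, neg_eq_zero] at hij

variable [Fintype m] [Fintype n]

theorem mul_conjTranspose_self_le_one {U : Matrix m n 𝕜} (hU : Uᴴ * U = 1) : U * Uᴴ ≤ 1 :=
  (isStarProjection_mul_conjTranspose hU).le_one

theorem mul_fromBlocks_one_eq_self_iff_of_le_one {Q : Matrix (m ⊕ n) (m ⊕ n) 𝕜} (hQ : Q ≤ 1) :
    Q * fromBlocks 1 0 0 0 = fromBlocks 1 0 0 0 ↔ Q.toBlocks₁₁ = 1 := by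
  rw [mul_fromBlocks_one_zero_zero_zero, fromBlocks_inj]
  exact ⟨fun h ↦ h.1, fun h ↦ ⟨h, rfl, toBlocks₂₁_eq_zero_of_le_one hQ h, rfl⟩⟩

theorem stmt0_general [Fintype l] {Ψ : Matrix l (m ⊕ n) 𝕜} {Φ : Matrix (m ⊕ n) l 𝕜}
    (hΦ : Φ * Ψ = 1) {Q : Matrix (m ⊕ n) (m ⊕ n) 𝕜} (hQ : Q ≤ 1) :
    Ψ * Q * Φ * (Ψ * (fromBlocks 1 0 0 0 : Matrix (m ⊕ n) (m ⊕ n) 𝕜) * Φ) =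
      Ψ * (fromBlocks 1 0 0 0 : Matrix (m ⊕ n) (m ⊕ n) 𝕜) * Φ ↔ Q.toBlocks₁₁ = 1 := by
  rw [conj_mul_conj_of_mul_eq_one hΦ, (conj_injective_of_mul_eq_one hΦ).eq_iff,
    mul_fromBlocks_one_eq_self_iff_of_le_one hQ]

end Order

/-- With `U` having orthonormal columns, partitioned into frozen rows `U_f`
and remaining rows `U_r`, and `Ψ` with orthonormal columns, the projector condition
`P_w P_f = P_f` holds iff `U_f U_fᴴ = I`. -/
theorem stmt0 (ng nf nr nw : ℕ)
    (Ψ : Matrix (Fin ng) (Fin nf ⊕ Fin nr) ℂ)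
    (U : Matrix (Fin nf ⊕ Fin nr) (Fin nw) ℂ)
    (hΨ : Ψᴴ * Ψ = 1) (hU : Uᴴ * U = 1)
    (Uf : Matrix (Fin nf) (Fin nw) ℂ)
    (hUf : Uf = U.submatrix Sum.inl id)
    (Pw Pf : Matrix (Fin ng) (Fin ng) ℂ)
    (hPw : Pw = Ψ * (U * Uᴴ) * Ψᴴ)
    (hPf : Pf = Ψ * (fromBlocks (1 : Matrix (Fin nf) (Fin nf) ℂ) 0 0
      (0 : Matrix (Fin nr) (Fin nr) ℂ)) * Ψᴴ) :
    Pw * Pf = Pf ↔ Uf * Ufᴴ = 1 := by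
  subst hUf hPw hPf
  rw [← toBlocks₁₁_mul_conjTranspose_self]
  exact stmt0_general hΨ (mul_conjTranspose_self_le_one hU)
end

section
/- Let U be an N_o × N_w complex matrix with U*U = I_{N_w}, partitioned as U = [U_f; U_r] with U_f of size N_f × N_w satisfying U_f U_f* = I_{N_f}. Then there exist a unitary N_w × N_w matrix X and an (N_o − N_f) × (N_w − N_f) matrix Y with Y*Y = I such that U = [[I_{N_f}, 0],[0, Y]] X. -/
/-!
Write `U = [A; B]` with `A Aᴴ = 1`, and complete the rows of `A` to a unitary `X = [A; C]`. Since
`Bᴴ B = 1 - Aᴴ A`, we get `(B Aᴴ)ᴴ (B Aᴴ) = A Aᴴ - (A Aᴴ)² = 0`: the rows of `B` are orthogonal to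
those of `A`, so they are combinations of the rows of `C`, with coefficient matrix `Y = B Cᴴ`.
-/

open Matrix

section Completion

variable {𝕜 : Type*} [RCLike 𝕜]

theorem exists_orthonormalBasis_comp_eq {E ι κ : Type*} [NormedAddCommGroup E]
    [InnerProductSpace 𝕜 E] [FiniteDimensional 𝕜 E] [Fintype κ] {v : ι → E}
    (hv : Orthonormal 𝕜 v) {f : ι → κ} (hf : f.Injective)
    (hcard : Module.finrank 𝕜 E = Fintype.card κ) :
    ∃ b : OrthonormalBasis κ 𝕜 E, b ∘ f = v := by
  have hext : Orthonormal 𝕜 ((Set.range f).domRestrict (Function.extend f v 0)) := by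
    convert hv.comp _ (Equiv.ofInjective f hf).symm.injective using 1
    ext ⟨_, i, rfl⟩
    simp [hf.extend_apply]
  obtain ⟨b, hb⟩ := hext.exists_orthonormalBasis_extension_of_card_eq hcard
  exact ⟨b, funext fun i => (hb _ ⟨i, rfl⟩).trans (hf.extend_apply v 0 i)⟩

theorem orthonormal_toLp_rows_iff {m n : Type*} [DecidableEq m] [Fintype n]
    {A : Matrix m n 𝕜} : Orthonormal 𝕜 (fun i => WithLp.toLp 2 (A i)) ↔ A * Aᴴ = 1 := by
  have hgram : gram 𝕜 (fun i => WithLp.toLp 2 (A i)) = (A * Aᴴ)ᵀ := rfl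
  rw [← gram_eq_one_iff_orthonormal, hgram, transpose_eq_one]

theorem exists_fromRows_mul_conjTranspose_eq_one {m₁ m₂ n : Type*} [Fintype m₁] [Fintype m₂]
    [Fintype n] [DecidableEq m₁] [DecidableEq m₂] {A : Matrix m₁ n 𝕜} (hA : A * Aᴴ = 1)
    (hcard : Fintype.card n = Fintype.card (m₁ ⊕ m₂)) :
    ∃ C : Matrix m₂ n 𝕜, fromRows A C * (fromRows A C)ᴴ = 1 := by
  obtain ⟨b, hb⟩ := exists_orthonormalBasis_comp_eq (orthonormal_toLp_rows_iff.2 hA)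
    (Sum.inl_injective (β := m₂)) (finrank_euclideanSpace.trans hcard)
  refine ⟨of fun i => (b (Sum.inr i)).ofLp, orthonormal_toLp_rows_iff.1 ?_⟩
  have hrows : (fun i => WithLp.toLp 2 (fromRows A (of fun i => (b (Sum.inr i)).ofLp) i)) = b := by
    funext i
    rcases i with i | i
    · exact (congrFun hb i).symm
    · rfl
  exact hrows ▸ b.orthonormal

end Completion

section Semiring

variable {R m₁ m₂ n : Type*} [Semiring R] [StarRing R]

theorem conjTranspose_fromRows_mul_fromRows [Fintype m₁] [Fintype m₂]
    (A : Matrix m₁ n R) (B : Matrix m₂ n R) :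
    (fromRows A B)ᴴ * fromRows A B = Aᴴ * A + Bᴴ * B := by
  rw [conjTranspose_fromRows_eq_fromCols_conjTranspose, fromCols_mul_fromRows]

theorem fromRows_mul_conjTranspose_fromRows [Fintype n]
    (A : Matrix m₁ n R) (C : Matrix m₂ n R) :
    fromRows A C * (fromRows A C)ᴴ = fromBlocks (A * Aᴴ) (A * Cᴴ) (C * Aᴴ) (C * Cᴴ) := by
  rw [conjTranspose_fromRows_eq_fromCols_conjTranspose, fromRows_mul_fromCols]

theorem conjTranspose_mul_self_mul_conjTranspose_eq_one [Fintype m₁] [Fintype m₂] [Fintype n]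
    [DecidableEq m₂] {B : Matrix m₁ n R} {C : Matrix m₂ n R} (hBC : Bᴴ * B = Cᴴ * C)
    (hC : C * Cᴴ = 1) : (B * Cᴴ)ᴴ * (B * Cᴴ) = 1 := by
  calc (B * Cᴴ)ᴴ * (B * Cᴴ) = C * (Bᴴ * B) * Cᴴ := by
        simp only [conjTranspose_mul, conjTranspose_conjTranspose, Matrix.mul_assoc]
    _ = C * Cᴴ * (C * Cᴴ) := by rw [hBC]; simp only [Matrix.mul_assoc]
    _ = 1 := by rw [hC, Matrix.mul_one]

end Semiring

section Ring

variable {R m₁ m₂ n : Type*} [Ring R] [StarRing R] [Fintype m₁] [DecidableEq n]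
  {A : Matrix m₁ n R}

theorem conjTranspose_mul_self_eq_one_sub_of_fromRows [Fintype m₂] {B : Matrix m₂ n R}
    (hU : (fromRows A B)ᴴ * fromRows A B = 1) : Bᴴ * B = 1 - Aᴴ * A :=
  eq_sub_of_add_eq' ((conjTranspose_fromRows_mul_fromRows A B).symm.trans hU)

variable [Fintype n]

theorem mul_conjTranspose_eq_zero_of_fromRows [PartialOrder R] [StarOrderedRing R]
    [NoZeroDivisors R] [Fintype m₂] [DecidableEq m₁] {B : Matrix m₂ n R}
    (hU : (fromRows A B)ᴴ * fromRows A B = 1) (hA : A * Aᴴ = 1) : B * Aᴴ = 0 := by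
  rw [← conjTranspose_mul_self_eq_zero]
  calc (B * Aᴴ)ᴴ * (B * Aᴴ) = A * (Bᴴ * B) * Aᴴ := by
        simp only [conjTranspose_mul, conjTranspose_conjTranspose, Matrix.mul_assoc]
    _ = A * Aᴴ - A * Aᴴ * (A * Aᴴ) := by
        rw [conjTranspose_mul_self_eq_one_sub_of_fromRows hU]
        simp only [Matrix.mul_sub, Matrix.sub_mul, Matrix.mul_one, Matrix.mul_assoc]
    _ = 0 := by rw [hA, Matrix.mul_one, sub_self]

theorem fromRows_eq_fromBlocks_mul_fromRows {m₃ : Type*} [Fintype m₃] [DecidableEq m₁]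
    {B : Matrix m₂ n R} {C : Matrix m₃ n R} (hX : (fromRows A C)ᴴ * fromRows A C = 1)
    (hBA : B * Aᴴ = 0) :
    fromRows A B = fromBlocks (1 : Matrix m₁ m₁ R) 0 0 (B * Cᴴ) * fromRows A C := by
  have hB : B * Cᴴ * C = B := by
    rw [Matrix.mul_assoc, conjTranspose_mul_self_eq_one_sub_of_fromRows hX, Matrix.mul_sub,
      ← Matrix.mul_assoc, hBA, Matrix.mul_one, Matrix.zero_mul, sub_zero]
  simp only [fromBlocks_mul_fromRows, Matrix.one_mul, Matrix.zero_mul, add_zero, zero_add, hB]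

end Ring

open scoped ComplexOrder in
theorem stmt2_general {𝕜 f r m : Type*} [RCLike 𝕜] [Fintype f] [Fintype r] [Fintype m]
    [DecidableEq f] [DecidableEq m] (U : Matrix (f ⊕ r) (f ⊕ m) 𝕜) (hU : Uᴴ * U = 1)
    (hUf : U.toRows₁ * U.toRows₁ᴴ = 1) :
    ∃ X ∈ unitaryGroup (f ⊕ m) 𝕜, ∃ Y : Matrix r m 𝕜, Yᴴ * Y = 1 ∧
      U = fromBlocks (1 : Matrix f f 𝕜) 0 0 Y * X := by
  rw [← fromRows_toRows U] at hU ⊢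
  obtain ⟨C, hX⟩ := exists_fromRows_mul_conjTranspose_eq_one (m₂ := m) hUf rfl
  have hXcols : (fromRows U.toRows₁ C)ᴴ * fromRows U.toRows₁ C = 1 := mul_eq_one_comm.1 hX
  have hBC : U.toRows₂ᴴ * U.toRows₂ = Cᴴ * C := by
    rw [conjTranspose_mul_self_eq_one_sub_of_fromRows hU,
      conjTranspose_mul_self_eq_one_sub_of_fromRows hXcols]
  have hBA : U.toRows₂ * U.toRows₁ᴴ = 0 := mul_conjTranspose_eq_zero_of_fromRows hU hUf
  have hCC : C * Cᴴ = 1 := by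
    rw [fromRows_mul_conjTranspose_fromRows, ← fromBlocks_one, fromBlocks_inj] at hX
    exact hX.2.2.2
  exact ⟨fromRows U.toRows₁ C, mem_unitaryGroup_iff.2 hX, U.toRows₂ * Cᴴ,
    conjTranspose_mul_self_mul_conjTranspose_eq_one hBC hCC,
    fromRows_eq_fromBlocks_mul_fromRows hXcols hBA⟩

/-- If `U` has orthonormal columns and its frozen block satisfies
`U_f U_fᴴ = I`, then `U` factors as `[[I,0],[0,Y]] X` with `X` unitary and
`Y` having orthonormal columns.  Here `N_o = nf + nr` and `N_w = nf + m`. -/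
theorem stmt2 (nf nr m : ℕ)
    (U : Matrix (Fin nf ⊕ Fin nr) (Fin nf ⊕ Fin m) ℂ)
    (hU : Uᴴ * U = 1)
    (hUf : (U.submatrix Sum.inl id) * (U.submatrix Sum.inl id)ᴴ = 1) :
    ∃ X : Matrix (Fin nf ⊕ Fin m) (Fin nf ⊕ Fin m) ℂ,
      X ∈ Matrix.unitaryGroup (Fin nf ⊕ Fin m) ℂ ∧
      ∃ Y : Matrix (Fin nr) (Fin m) ℂ, Yᴴ * Y = 1 ∧
        U = fromBlocks (1 : Matrix (Fin nf) (Fin nf) ℂ) 0 0 Y * X :=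
  stmt2_general U hU hUf
end
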